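/- arXiv:1710.02288 — 5 statements merged into one kernel-verified Lean document; each statement's English description precedes it below -/
import Mathlib

section
/- Let 0 ≤ j ≤ r − 1 and set k_j = g − d + α_j + j. Then the diagram λ^{j+1} and its subdiagram μ_j meet the diagonal S_{k_j} in exactly the same boxes: λ^{j+1} ∩ S_{k_j} = μ_j ∩ S_{k_j}. -/
/-- With `λ_i` the rectangle `{(x,y) : x ≤ g−d+r+α_i, y ≤ r+1−i}`,
`λ^j = λ_0 ∪ ⋯ ∪ λ_j`, `μ_j = λ^j ∩ λ_{j+1}`, `S_k = {(x,y) : x − y = k}` and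
`k_j = g − d + α_j + j`, one has `λ^{j+1} ∩ S_{k_j} = μ_j ∩ S_{k_j}`. -/
theorem diagonal_intersection (g d : ℤ) (r : ℕ) (hrd : (r : ℤ) ≤ d) (hgdr : 0 ≤ g - d + r)
    (α : ℕ → ℤ) (hαmono : ∀ i j : ℕ, i ≤ j → j ≤ r → α i ≤ α j)
    (hαbd : ∀ i : ℕ, i ≤ r → 0 ≤ α i ∧ α i ≤ d - r)
    (lam : ℕ → Set (ℤ × ℤ))
    (hlam : ∀ i : ℕ, lam i =
      {p : ℤ × ℤ | 1 ≤ p.1 ∧ 1 ≤ p.2 ∧ p.1 ≤ g - d + r + α i ∧ p.2 ≤ (r : ℤ) + 1 - i})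
    (j : ℕ) (hj : j + 1 ≤ r) :
    (⋃ i ∈ Finset.range (j + 2), lam i) ∩ {p : ℤ × ℤ | p.1 - p.2 = g - d + α j + j} =
      ((⋃ i ∈ Finset.range (j + 1), lam i) ∩ lam (j + 1)) ∩
        {p : ℤ × ℤ | p.1 - p.2 = g - d + α j + j} := by
  ext ⟨x, y⟩
  simp only [hlam, Set.mem_inter_iff, Set.mem_iUnion, Finset.mem_range, Set.mem_setOf_eq,
    exists_prop]
  have h1 := hαmono j (j + 1) (by omega) hj
  constructor
  · rintro ⟨⟨i, hi, hx, hy, hxi, hyi⟩, hk⟩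
    by_cases hij : i ≤ j
    · have h2 := hαmono i j hij (by omega)
      refine ⟨⟨⟨i, by omega, hx, hy, hxi, hyi⟩, hx, hy, ?_, ?_⟩, hk⟩
      · omega
      · push_cast
        omega
    · obtain rfl : i = j + 1 := by omega
      refine ⟨⟨⟨j, by omega, hx, hy, ?_, ?_⟩, hx, hy, hxi, hyi⟩, hk⟩
      · push_cast at hyi
        omega
      · push_cast at hyi
        omega
  · rintro ⟨⟨⟨i, hi, h⟩, _⟩, hk⟩
    exact ⟨⟨i, by omega, h⟩, hk⟩
end

section
/- Let g ≥ 2, let m = (m_2, …, m_g) be a generic torsion profile, and let t be an m-displacement tableau on a Young diagram λ. Then t is injective. -/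
/-- A Young diagram: a finite set of boxes `(x,y) ∈ ℤ_{>0} × ℤ_{>0}` which is
downward closed. -/
def IsYoungDiagram (lam : Set (ℤ × ℤ)) : Prop :=
  lam.Finite ∧ (∀ p ∈ lam, 1 ≤ p.1 ∧ 1 ≤ p.2) ∧
    ∀ p ∈ lam, ∀ x' y' : ℤ, 1 ≤ x' → x' ≤ p.1 → 1 ≤ y' → y' ≤ p.2 → (x', y') ∈ lam

/-- An `m`-displacement tableau on `lam`: a function `t : lam → {1,…,g}` strictly
increasing along each row and each column, such that any two boxes with the same
value `i ≥ 2` lie on diagonals congruent mod `m i` (congruence mod `0` is equality). -/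
def IsDisplacementTableau (g : ℕ) (m : ℕ → ℕ) (lam : Set (ℤ × ℤ)) (t : ℤ × ℤ → ℕ) : Prop :=
  (∀ p ∈ lam, 1 ≤ t p ∧ t p ≤ g) ∧
  (∀ p ∈ lam, ∀ q ∈ lam, p.2 = q.2 → p.1 < q.1 → t p < t q) ∧
  (∀ p ∈ lam, ∀ q ∈ lam, p.1 = q.1 → p.2 < q.2 → t p < t q) ∧
  (∀ p ∈ lam, ∀ q ∈ lam, t p = t q → 2 ≤ t p →
    Int.ModEq (m (t p) : ℤ) (p.1 - p.2) (q.1 - q.2))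

/-- A torsion profile `(m_2, …, m_g)` is generic if each entry is `0` or `> 2g − 2`. -/
def GenericProfile (g : ℕ) (m : ℕ → ℕ) : Prop :=
  ∀ i : ℕ, 2 ≤ i → i ≤ g → m i = 0 ∨ 2 * g - 2 < m i

theorem dt_lower_bound (g : ℕ) (m : ℕ → ℕ) (lam : Set (ℤ × ℤ)) (hlam : IsYoungDiagram lam)
    (t : ℤ × ℤ → ℕ) (ht : IsDisplacementTableau g m lam t) (n : ℕ) :
    ∀ x y : ℤ, (x, y) ∈ lam → x + y = n + 2 → n + 1 ≤ t (x, y) := by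
  obtain ⟨-, hpos, hdown⟩ := hlam
  obtain ⟨hr, hrow, hcol, -⟩ := ht
  induction n with
  | zero => intro x y h _; exact (hr _ h).1
  | succ k ih =>
    intro x y h hxy
    have hp := hpos _ h
    simp only at hp
    push_cast at hxy
    by_cases hx : 1 < x
    · have h' := hdown _ h (x - 1) y (by omega) (by simp) (by omega) (by simp)
      have h1 := ih (x - 1) y h' (by omega)
      have h2 := hrow _ h' _ h rfl (by simp)
      omega
    · have h' := hdown _ h x (y - 1) (by omega) (by simp) (by omega) (by simp)
      have h1 := ih x (y - 1) h' (by omega)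
      have h2 := hcol _ h' _ h rfl (by simp)
      omega

theorem dt_diag (g : ℕ) (m : ℕ → ℕ) (lam : Set (ℤ × ℤ)) (hlam : IsYoungDiagram lam)
    (t : ℤ × ℤ → ℕ) (ht : IsDisplacementTableau g m lam t) (x y x' y' : ℤ)
    (h : (x, y) ∈ lam) (h' : (x', y') ∈ lam) (hx : x < x') (hy : y < y') :
    t (x, y) < t (x', y') := by
  have h0 := hlam.2.1 _ h
  simp only at h0
  have hc : (x', y) ∈ lam := hlam.2.2 _ h' x' y (by omega) le_rfl (by omega) hy.le
  exact (ht.2.1 _ h _ hc rfl hx).trans (ht.2.2.1 _ hc _ h' rfl hy)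

/-- For a generic torsion profile `m`, every `m`-displacement tableau
on a Young diagram is injective. -/
theorem displacement_tableau_injective (g : ℕ) (hg : 2 ≤ g) (m : ℕ → ℕ)
    (hm : GenericProfile g m) (lam : Set (ℤ × ℤ)) (hlam : IsYoungDiagram lam)
    (t : ℤ × ℤ → ℕ) (ht : IsDisplacementTableau g m lam t) :
    ∀ p ∈ lam, ∀ q ∈ lam, t p = t q → p = q := by
  rintro ⟨x, y⟩ hp ⟨x', y'⟩ hq e
  have p0 := hlam.2.1 _ hp
  have q0 := hlam.2.1 _ hq
  simp only at p0 q0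
  have p1 := dt_lower_bound g m lam hlam t ht (x + y - 2).toNat x y hp (by omega)
  have q1 := dt_lower_bound g m lam hlam t ht (x' + y' - 2).toNat x' y' hq (by omega)
  have r := ht.1 _ hp
  have d : x - y = x' - y' := by
    by_cases h2 : 2 ≤ t (x, y)
    · have hc := ht.2.2.2 _ hp _ hq e h2
      simp only at hc
      rcases hm _ h2 r.2 with h0 | h0
      · rw [h0] at hc
        simpa [Int.modEq_zero_iff] using hc
      · have hz := Int.eq_zero_of_abs_lt_dvd hc.dvd (by rw [abs_lt]; constructor <;> omega)
        omega
    · omega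
  rcases lt_trichotomy x x' with h | h | h
  · have := dt_diag g m lam hlam t ht _ _ _ _ hp hq h (by omega)
    omega
  · ext <;> simp only <;> omega
  · have := dt_diag g m lam hlam t ht _ _ _ _ hq hp h (by omega)
    omega
end

section
/- Let g ≥ 2 and let m = (m_2, …, m_g) be a generic torsion profile. Let t be an m-displacement tableau on a Young diagram λ and t' an m-displacement tableau on a Young diagram μ. Suppose (x,y) ∈ λ and (x',y') ∈ μ satisfy t(x,y) = t'(x',y'), and in case t(x,y) ≥ 2 suppose moreover x − y ≡ x' − y' (mod m_{t(x,y)}), where congruence mod 0 means equality. Then x − y = x' − y'. -/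
theorem tableau_lower_bound {g : ℕ} {m : ℕ → ℕ} {lam : Set (ℤ × ℤ)} {t : ℤ × ℤ → ℕ}
    (hlam : IsYoungDiagram lam) (ht : IsDisplacementTableau g m lam t) :
    ∀ n : ℕ, ∀ p ∈ lam, p.1 + p.2 = (n : ℤ) + 2 → n + 1 ≤ t p := by
  obtain ⟨-, hpos, hdown⟩ := hlam
  obtain ⟨hb, hr, hc, -⟩ := ht
  intro n
  induction n with
  | zero => intro p hp _; exact (hb p hp).1
  | succ k ih =>
    intro p hp hs
    have h1 := hpos p hp
    push_cast at hs
    by_cases hx : 2 ≤ p.1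
    · have hq : (p.1 - 1, p.2) ∈ lam :=
        hdown p hp _ _ (by omega) (by omega) (by omega) (by omega)
      have h2 := ih _ hq (by simp only; omega)
      have h3 := hr _ hq p hp rfl (by simp only; omega)
      omega
    · have hq : (p.1, p.2 - 1) ∈ lam :=
        hdown p hp _ _ (by omega) (by omega) (by omega) (by omega)
      have h2 := ih _ hq (by simp only; omega)
      have h3 := hc _ hq p hp rfl (by simp only; omega)
      omega

/-- If `t`, `t'` are `m`-displacement tableaux on Young diagrams `λ`,
`μ` for a generic profile `m`, and boxes `(x,y) ∈ λ`, `(x',y') ∈ μ` satisfy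
`t(x,y) = t'(x',y')` and (when `t(x,y) ≥ 2`) `x − y ≡ x' − y' (mod m_{t(x,y)})`,
then `x − y = x' − y'`. -/
theorem diag_congruence_implies_equality (g : ℕ) (hg : 2 ≤ g) (m : ℕ → ℕ)
    (hm : GenericProfile g m)
    (lam mu : Set (ℤ × ℤ)) (hlam : IsYoungDiagram lam) (hmu : IsYoungDiagram mu)
    (t t' : ℤ × ℤ → ℕ)
    (ht : IsDisplacementTableau g m lam t) (ht' : IsDisplacementTableau g m mu t')
    (p p' : ℤ × ℤ) (hp : p ∈ lam) (hp' : p' ∈ mu)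
    (heq : t p = t' p')
    (hcong : 2 ≤ t p → Int.ModEq (m (t p) : ℤ) (p.1 - p.2) (p'.1 - p'.2)) :
    p.1 - p.2 = p'.1 - p'.2 := by
  have a := tableau_lower_bound hlam ht (p.1 + p.2 - 2).toNat p hp
    (by have := hlam.2.1 p hp; omega)
  have b := tableau_lower_bound hmu ht' (p'.1 + p'.2 - 2).toNat p' hp'
    (by have := hmu.2.1 p' hp'; omega)
  have a1 := hlam.2.1 p hp
  have b1 := hmu.2.1 p' hp'
  have a2 := ht.1 p hp
  by_cases h2 : 2 ≤ t p
  · have hd := (hcong h2).dvd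
    rcases hm _ h2 a2.2 with h0 | h0
    · rw [h0] at hd
      rw [Nat.cast_zero, zero_dvd_iff] at hd
      omega
    · have := Int.eq_zero_of_abs_lt_dvd hd (by rw [abs_lt]; constructor <;> omega)
      omega
  · omega
end

section
/- Let g ≥ 2, let m = (m_2, …, m_g) be a generic torsion profile, and let 0 ≤ j ≤ r − 1. Let t be an m-displacement tableau on λ^{j+1} and t' an m-displacement tableau on μ_j. Suppose that the image t'(μ_j) is contained in the image t(λ^{j+1}), and that for all boxes (x,y) ∈ λ^{j+1} and (x',y') ∈ μ_j with t(x,y) = t'(x',y') ≥ 2 one has x − y ≡ x' − y' (mod m_{t(x,y)}), where congruence mod 0 means equality. Then t' is the restriction of t to μ_j, i.e., t'(x,y) = t(x,y) for every box (x,y) ∈ μ_j. -/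
def DownClosed (S : Set (ℤ × ℤ)) : Prop :=
  (∀ x y : ℤ, (x, y) ∈ S → 1 ≤ x ∧ 1 ≤ y) ∧
  ∀ x y x' y' : ℤ, (x, y) ∈ S → 1 ≤ x' → x' ≤ x → 1 ≤ y' → y' ≤ y → (x', y') ∈ S

theorem hook_bound {g : ℕ} {m : ℕ → ℕ} {S : Set (ℤ × ℤ)} {t : ℤ × ℤ → ℕ}
    (hS : DownClosed S) (ht : IsDisplacementTableau g m S t) :
    ∀ n : ℕ, ∀ x y : ℤ, (x, y) ∈ S → x + y - 1 ≤ n → x + y - 1 ≤ (t (x, y) : ℤ) := by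
  obtain ⟨h1, h2, h3, -⟩ := ht
  intro n
  induction n with
  | zero =>
    intro x y hp hn
    have := hS.1 x y hp
    have := h1 _ hp
    push_cast at hn
    omega
  | succ n ih =>
    intro x y hp hn
    push_cast at hn
    have hxy := hS.1 x y hp
    have hb := h1 _ hp
    by_cases hx : 1 < x
    · have hq := hS.2 x y (x - 1) y hp (by omega) (by omega) (by omega) (by omega)
      have := ih _ _ hq (by omega)
      have := h2 _ hq _ hp rfl (by simp)
      omega
    · by_cases hy : 1 < y
      · have hq := hS.2 x y x (y - 1) hp (by omega) (by omega) (by omega) (by omega)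
        have := ih _ _ hq (by omega)
        have := h3 _ hq _ hp rfl (by simp)
        omega
      · omega

theorem hook_bound' {g : ℕ} {m : ℕ → ℕ} {S : Set (ℤ × ℤ)} {t : ℤ × ℤ → ℕ}
    (hS : DownClosed S) (ht : IsDisplacementTableau g m S t) (x y : ℤ) (h : (x, y) ∈ S) :
    x + y - 1 ≤ (t (x, y) : ℤ) :=
  hook_bound hS ht (x + y - 1).toNat x y h (by omega)

theorem weak_mono {g : ℕ} {m : ℕ → ℕ} {S : Set (ℤ × ℤ)} {t : ℤ × ℤ → ℕ}
    (hS : DownClosed S) (ht : IsDisplacementTableau g m S t) (x y x' y' : ℤ)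
    (h : (x, y) ∈ S) (h' : (x', y') ∈ S) (hx : x' ≤ x) (hy : y' ≤ y) :
    t (x', y') ≤ t (x, y) := by
  obtain ⟨h1, h2, h3, -⟩ := ht
  have p1 := hS.1 _ _ h'
  have hq := hS.2 x y x y' h (by omega) le_rfl (by omega) hy
  have a1 : t (x', y') ≤ t (x, y') := by
    rcases hx.lt_or_eq with hh | rfl
    · exact (h2 _ h' _ hq rfl hh).le
    · exact le_rfl
  have a2 : t (x, y') ≤ t (x, y) := by
    rcases hy.lt_or_eq with hh | rfl
    · exact (h3 _ hq _ h rfl hh).le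
    · exact le_rfl
  exact a1.trans a2

theorem core (g : ℕ) (m : ℕ → ℕ) (hm : GenericProfile g m)
    (Λ μ : Set (ℤ × ℤ)) (a b : ℤ) (hΛ : DownClosed Λ)
    (hμ : ∀ x y : ℤ, (x, y) ∈ μ ↔ 1 ≤ x ∧ x ≤ a ∧ 1 ≤ y ∧ y ≤ b)
    (hout : ∀ x y : ℤ, (x, y) ∈ Λ → x ≤ a ∨ y ≤ b)
    (t t' : ℤ × ℤ → ℕ)
    (ht : IsDisplacementTableau g m Λ t) (ht' : IsDisplacementTableau g m μ t')
    (himg : ∀ p ∈ μ, ∃ q ∈ Λ, t q = t' p)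
    (hcong : ∀ p ∈ Λ, ∀ q ∈ μ, t p = t' q → 2 ≤ t p →
      Int.ModEq (m (t p) : ℤ) (p.1 - p.2) (q.1 - q.2)) :
    ∀ p ∈ μ, t' p = t p := by
  have hμd : DownClosed μ := by
    refine ⟨fun x y h => ?_, fun x y x' y' h _ _ _ _ => ?_⟩
    · rw [hμ] at h; omega
    · rw [hμ] at h ⊢; omega
  have key : ∀ x y : ℤ, ∃ k : ℤ, (x, y) ∈ μ → (x + k, y + k) ∈ Λ ∧ t (x + k, y + k) = t' (x, y) := by
    intro x y
    by_cases hp : (x, y) ∈ μ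
    swap
    · exact ⟨0, fun h => absurd h hp⟩
    obtain ⟨⟨u, v⟩, hq, e⟩ := himg _ hp
    have b1 := hook_bound' hΛ ht _ _ hq
    have b2 := hook_bound' hμd ht' _ _ hp
    have c1 := hΛ.1 _ _ hq
    have c2 := hμd.1 _ _ hp
    have d1 := ht.1 _ hq
    have : u - v = x - y := by
      by_cases h2 : 2 ≤ t (u, v)
      · have hc := hcong _ hq _ hp e h2
        rcases hm _ h2 d1.2 with h0 | h0
        · rw [h0] at hc
          simpa [Int.ModEq] using hc
        · have hd := hc.dvd
          simp only at hd
          have := Int.eq_zero_of_abs_lt_dvd hd (by rw [abs_lt]; omega)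
          omega
      · omega
    refine ⟨u - x, fun _ => ?_⟩
    have e1 : x + (u - x) = u := by ring
    have e2 : y + (u - x) = v := by omega
    rw [e1, e2]
    exact ⟨hq, e⟩
  choose k hk using key
  have stepx : ∀ x y : ℤ, (x, y) ∈ μ → (x + 1, y) ∈ μ → k x y ≤ k (x + 1) y := by
    intro x y hp hq
    by_contra hlt
    obtain ⟨p1, p2⟩ := hk _ _ hp
    obtain ⟨q1, q2⟩ := hk _ _ hq
    have := weak_mono hΛ ht _ _ _ _ p1 q1 (by omega) (by omega)
    have := ht'.2.1 _ hp _ hq rfl (by simp)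
    omega
  have stepy : ∀ x y : ℤ, (x, y) ∈ μ → (x, y + 1) ∈ μ → k x y ≤ k x (y + 1) := by
    intro x y hp hq
    by_contra hlt
    obtain ⟨p1, p2⟩ := hk _ _ hp
    obtain ⟨q1, q2⟩ := hk _ _ hq
    have := weak_mono hΛ ht _ _ _ _ p1 q1 (by omega) (by omega)
    have := ht'.2.2.1 _ hp _ hq rfl (by simp)
    omega
  have itx : ∀ n : ℕ, ∀ x y : ℤ, (x, y) ∈ μ → (x + n, y) ∈ μ → k x y ≤ k (x + n) y := by
    intro n
    induction n with
    | zero => intro x y _ _; simp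
    | succ n ih =>
      intro x y hp hq
      have e : x + ((n + 1 : ℕ) : ℤ) = x + n + 1 := by push_cast; ring
      rw [e] at hq ⊢
      have hr : (x + n, y) ∈ μ := by rw [hμ] at *; omega
      exact (ih x y hp hr).trans (stepx _ _ hr hq)
  have ity : ∀ n : ℕ, ∀ x y : ℤ, (x, y) ∈ μ → (x, y + n) ∈ μ → k x y ≤ k x (y + n) := by
    intro n
    induction n with
    | zero => intro x y _ _; simp
    | succ n ih =>
      intro x y hp hq
      have e : y + ((n + 1 : ℕ) : ℤ) = y + n + 1 := by push_cast; ring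
      rw [e] at hq ⊢
      have hr : (x, y + n) ∈ μ := by rw [hμ] at *; omega
      exact (ih x y hp hr).trans (stepy _ _ hr hq)
  have mono : ∀ x y x' y' : ℤ, (x, y) ∈ μ → (x', y') ∈ μ → x ≤ x' → y ≤ y' →
      k x y ≤ k x' y' := by
    intro x y x' y' hp hq hx hy
    obtain ⟨n, rfl⟩ := Int.le.dest hx
    obtain ⟨l, rfl⟩ := Int.le.dest hy
    have hr : (x + n, y) ∈ μ := by rw [hμ] at *; omega
    exact (itx n x y hp hr).trans (ity l _ _ hr hq)
  rintro ⟨x, y⟩ hp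
  have hp' := (hμ x y).1 hp
  have h11 : ((1 : ℤ), (1 : ℤ)) ∈ μ := by rw [hμ]; omega
  have hab : (a, b) ∈ μ := by rw [hμ]; omega
  have m1 := mono _ _ _ _ h11 hp (by omega) (by omega)
  have m2 := mono _ _ _ _ hp hab (by omega) (by omega)
  have n1 := hΛ.1 _ _ (hk _ _ h11).1
  have n2 := hout _ _ (hk _ _ hab).1
  have hk0 : k x y = 0 := by omega
  have := (hk _ _ hp).2
  rw [hk0] at this
  simpa using this.symm

/-- Let `m` be a generic torsion profile, `t` an `m`-displacement
tableau on `λ^{j+1}` and `t'` an `m`-displacement tableau on `μ_j`.  If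
`t'(μ_j) ⊆ t(λ^{j+1})` and for all boxes `(x,y) ∈ λ^{j+1}`, `(x',y') ∈ μ_j` with
`t(x,y) = t'(x',y') ≥ 2` one has `x − y ≡ x' − y' (mod m_{t(x,y)})`, then `t'` is the
restriction of `t` to `μ_j`. -/
theorem tableau_restriction (g : ℕ) (hg : 2 ≤ g) (m : ℕ → ℕ) (hm : GenericProfile g m)
    (d : ℤ) (r : ℕ) (hrd : (r : ℤ) ≤ d) (hgdr : 0 ≤ (g : ℤ) - d + r)
    (α : ℕ → ℤ) (hαmono : ∀ i j : ℕ, i ≤ j → j ≤ r → α i ≤ α j)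
    (hαbd : ∀ i : ℕ, i ≤ r → 0 ≤ α i ∧ α i ≤ d - r)
    (lam : ℕ → Set (ℤ × ℤ))
    (hlam : ∀ i : ℕ, lam i =
      {p : ℤ × ℤ | 1 ≤ p.1 ∧ 1 ≤ p.2 ∧ p.1 ≤ (g : ℤ) - d + r + α i ∧ p.2 ≤ (r : ℤ) + 1 - i})
    (j : ℕ) (hj : j + 1 ≤ r)
    (Λ μ : Set (ℤ × ℤ))
    (hΛ : Λ = ⋃ i ∈ Finset.range (j + 2), lam i)
    (hμ : μ = (⋃ i ∈ Finset.range (j + 1), lam i) ∩ lam (j + 1))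
    (t t' : ℤ × ℤ → ℕ)
    (ht : IsDisplacementTableau g m Λ t) (ht' : IsDisplacementTableau g m μ t')
    (himg : ∀ p ∈ μ, ∃ q ∈ Λ, t q = t' p)
    (hcong : ∀ p ∈ Λ, ∀ q ∈ μ, t p = t' q → 2 ≤ t p →
      Int.ModEq (m (t p) : ℤ) (p.1 - p.2) (q.1 - q.2)) :
    ∀ p ∈ μ, t' p = t p := by
  have hmemΛ : ∀ x y : ℤ, (x, y) ∈ Λ ↔ ∃ i : ℕ, i < j + 2 ∧
      1 ≤ x ∧ 1 ≤ y ∧ x ≤ (g : ℤ) - d + r + α i ∧ y ≤ (r : ℤ) + 1 - i := by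
    intro x y
    rw [hΛ]
    simp only [hlam, Set.mem_iUnion, Finset.mem_range, exists_prop, Set.mem_setOf_eq]
  have hmemμ : ∀ x y : ℤ, (x, y) ∈ μ ↔ (∃ i : ℕ, i < j + 1 ∧
      1 ≤ x ∧ 1 ≤ y ∧ x ≤ (g : ℤ) - d + r + α i ∧ y ≤ (r : ℤ) + 1 - i) ∧
      1 ≤ x ∧ 1 ≤ y ∧ x ≤ (g : ℤ) - d + r + α (j + 1) ∧ y ≤ (r : ℤ) + 1 - (j + 1 : ℕ) := by
    intro x y
    rw [hμ]
    simp only [hlam, Set.mem_inter_iff, Set.mem_iUnion, Finset.mem_range, exists_prop, Set.mem_setOf_eq]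
  refine core g m hm Λ μ ((g : ℤ) - d + r + α j) ((r : ℤ) - j) ?_ ?_ ?_ t t' ht ht' himg hcong
  · refine ⟨fun x y h => ?_, fun x y x' y' h _ _ _ _ => ?_⟩
    · obtain ⟨i, h⟩ := (hmemΛ x y).1 h
      omega
    · obtain ⟨i, h⟩ := (hmemΛ x y).1 h
      exact (hmemΛ x' y').2 ⟨i, by omega⟩
  · intro x y
    rw [hmemμ]
    have hs := hαmono j (j + 1) (by omega) hj
    constructor
    · rintro ⟨⟨i, hi⟩, h⟩
      have := hαmono i j (by omega) (by omega)
      omega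
    · intro h
      exact ⟨⟨j, by omega⟩, by omega⟩
  · intro x y h
    obtain ⟨i, h⟩ := (hmemΛ x y).1 h
    by_cases hi : i ≤ j
    · have := hαmono i j hi (by omega)
      omega
    · omega
end

section
/- Let g ≥ 2, let m = (m_2, …, m_g) be a generic torsion profile, let 0 ≤ j ≤ r − 1, and let t be an m-displacement tableau on λ^{j+1}. Then there is exactly one m-displacement tableau t' on μ_j such that t'(μ_j) ⊆ t(λ^{j+1}) and such that for all boxes (x,y) ∈ λ^{j+1} and (x',y') ∈ μ_j with t(x,y) = t'(x',y') ≥ 2 one has x − y ≡ x' − y' (mod m_{t(x,y)}) (congruence mod 0 meaning equality); namely, t' is the restriction of t to μ_j, which is itself an m-displacement tableau on μ_j. -/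
def LowerBox (S : Set (ℤ × ℤ)) : Prop :=
  (∀ p ∈ S, 1 ≤ p.1 ∧ 1 ≤ p.2) ∧
  (∀ x y x' y' : ℤ, (x, y) ∈ S → 1 ≤ x' → x' ≤ x → 1 ≤ y' → y' ≤ y → (x', y') ∈ S)

lemma idt_bound {g : ℕ} {m : ℕ → ℕ} {S : Set (ℤ × ℤ)} {t : ℤ × ℤ → ℕ} (hS : LowerBox S)
    (ht : IsDisplacementTableau g m S t) :
    ∀ n : ℕ, ∀ x y : ℤ, (x, y) ∈ S → x + y - 1 ≤ n → x + y - 1 ≤ t (x, y) := by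
  obtain ⟨h1, h2, h3, -⟩ := ht
  intro n
  induction n with
  | zero =>
    intro x y h hn
    have := h1 _ h
    push_cast at hn
    omega
  | succ n ih =>
    intro x y h hn
    have hp := hS.1 _ h
    simp only at hp
    push_cast at hn
    by_cases hx : x = 1
    · by_cases hy : y = 1
      · have := h1 _ h
        omega
      · have h' := hS.2 x y x (y-1) h (by omega) (by omega) (by omega) (by omega)
        have a := ih x (y-1) h' (by omega)
        have b := h3 _ h' _ h rfl (by simp)
        omega
    · have h' := hS.2 x y (x-1) y h (by omega) (by omega) (by omega) (by omega)
      have a := ih (x-1) y h' (by omega)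
      have b := h2 _ h' _ h rfl (by simp)
      omega

lemma idt_bound' {g : ℕ} {m : ℕ → ℕ} {S : Set (ℤ × ℤ)} {t : ℤ × ℤ → ℕ} (hS : LowerBox S)
    (ht : IsDisplacementTableau g m S t) (x y : ℤ) (h : (x, y) ∈ S) :
    x + y - 1 ≤ t (x, y) :=
  idt_bound hS ht (x + y - 1).toNat x y h (by omega)

lemma idt_mono {g : ℕ} {m : ℕ → ℕ} {S : Set (ℤ × ℤ)} {t : ℤ × ℤ → ℕ} (hS : LowerBox S)
    (ht : IsDisplacementTableau g m S t) (x y x' y' : ℤ) (h : (x, y) ∈ S) (h' : (x', y') ∈ S)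
    (hx : x ≤ x') (hy : y ≤ y') : t (x, y) ≤ t (x', y') := by
  obtain ⟨h1, h2, h3, -⟩ := ht
  have a := hS.1 _ h
  simp only at a
  have hm := hS.2 x' y' x' y h' (by omega) le_rfl (by omega) hy
  have e1 : t (x, y) ≤ t (x', y) := by
    rcases hx.eq_or_lt with rfl | hx
    · exact le_rfl
    · exact (h2 _ h _ hm rfl hx).le
  have e2 : t (x', y) ≤ t (x', y') := by
    rcases hy.eq_or_lt with rfl | hy
    · exact le_rfl
    · exact (h3 _ hm _ h' rfl hy).le
  exact e1.trans e2

lemma modEq_small {g : ℕ} (hg : 2 ≤ g) {M : ℕ} (hM : M = 0 ∨ 2 * g - 2 < M) {a b : ℤ}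
    (h : Int.ModEq (M : ℤ) a b) (h1 : a - b ≤ 2 * g - 2) (h2 : b - a ≤ 2 * g - 2) : a = b := by
  rcases hM with rfl | hM
  · simpa [Int.ModEq] using h
  · have hd := h.dvd
    have : b - a = 0 := by
      apply Int.eq_zero_of_abs_lt_dvd hd
      rw [abs_lt]
      constructor <;> omega
    omega

/-- Let `m` be a generic torsion profile and `t` an `m`-displacement
tableau on `λ^{j+1}`.  Then there is exactly one `m`-displacement tableau `t'` on
`μ_j` with `t'(μ_j) ⊆ t(λ^{j+1})` and with `x − y ≡ x' − y' (mod m_{t(x,y)})` whenever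
`(x,y) ∈ λ^{j+1}`, `(x',y') ∈ μ_j` and `t(x,y) = t'(x',y') ≥ 2`: namely the restriction
of `t` to `μ_j`, which is itself an `m`-displacement tableau on `μ_j`. -/
theorem tableau_restriction_unique (g : ℕ) (hg : 2 ≤ g) (m : ℕ → ℕ) (hm : GenericProfile g m)
    (d : ℤ) (r : ℕ) (hrd : (r : ℤ) ≤ d) (hgdr : 0 ≤ (g : ℤ) - d + r)
    (α : ℕ → ℤ) (hαmono : ∀ i j : ℕ, i ≤ j → j ≤ r → α i ≤ α j)
    (hαbd : ∀ i : ℕ, i ≤ r → 0 ≤ α i ∧ α i ≤ d - r)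
    (lam : ℕ → Set (ℤ × ℤ))
    (hlam : ∀ i : ℕ, lam i =
      {p : ℤ × ℤ | 1 ≤ p.1 ∧ 1 ≤ p.2 ∧ p.1 ≤ (g : ℤ) - d + r + α i ∧ p.2 ≤ (r : ℤ) + 1 - i})
    (j : ℕ) (hj : j + 1 ≤ r)
    (Λ μ : Set (ℤ × ℤ))
    (hΛ : Λ = ⋃ i ∈ Finset.range (j + 2), lam i)
    (hμ : μ = (⋃ i ∈ Finset.range (j + 1), lam i) ∩ lam (j + 1))
    (t : ℤ × ℤ → ℕ) (ht : IsDisplacementTableau g m Λ t) :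
    (IsDisplacementTableau g m μ t ∧
      (∀ p ∈ μ, ∃ q ∈ Λ, t q = t p) ∧
      (∀ p ∈ Λ, ∀ q ∈ μ, t p = t q → 2 ≤ t p →
        Int.ModEq (m (t p) : ℤ) (p.1 - p.2) (q.1 - q.2))) ∧
    (∀ t' : ℤ × ℤ → ℕ, IsDisplacementTableau g m μ t' →
      (∀ p ∈ μ, ∃ q ∈ Λ, t q = t' p) →
      (∀ p ∈ Λ, ∀ q ∈ μ, t p = t' q → 2 ≤ t p →
        Int.ModEq (m (t p) : ℤ) (p.1 - p.2) (q.1 - q.2)) →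
      ∀ p ∈ μ, t' p = t p) := by
  have memΛ : ∀ x y : ℤ, (x, y) ∈ Λ ↔ ∃ i : ℕ, i < j + 2 ∧ 1 ≤ x ∧ 1 ≤ y ∧
      x ≤ (g : ℤ) - d + r + α i ∧ y ≤ (r : ℤ) + 1 - i := by
    intro x y
    rw [hΛ]
    simp only [hlam, Set.mem_iUnion, Finset.mem_range, Set.mem_setOf_eq, exists_prop]
  have memμ : ∀ x y : ℤ, (x, y) ∈ μ ↔ 1 ≤ x ∧ 1 ≤ y ∧
      x ≤ (g : ℤ) - d + r + α j ∧ y ≤ (r : ℤ) - j := by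
    intro x y
    have hj1 := hαmono j (j+1) (by omega) hj
    have : (x, y) ∈ μ ↔ (∃ i : ℕ, i < j + 1 ∧ 1 ≤ x ∧ 1 ≤ y ∧
      x ≤ (g : ℤ) - d + r + α i ∧ y ≤ (r : ℤ) + 1 - i) ∧ (1 ≤ x ∧ 1 ≤ y ∧
      x ≤ (g : ℤ) - d + r + α (j+1) ∧ y ≤ (r : ℤ) + 1 - (j + 1)) := by
      rw [hμ]
      simp only [hlam, Set.mem_inter_iff, Set.mem_iUnion, Finset.mem_range, Set.mem_setOf_eq, exists_prop]
      push_cast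
      rfl
    rw [this]
    constructor
    · rintro ⟨⟨i, hi, a, b, c, e⟩, a', b', c', e'⟩
      have := hαmono i j (by omega) (by omega)
      refine ⟨a, b, by omega, by omega⟩
    · rintro ⟨a, b, c, e⟩
      exact ⟨⟨j, by omega, a, b, c, by omega⟩, a, b, by omega, by omega⟩
  have lowΛ : LowerBox Λ := by
    constructor
    · rintro ⟨x, y⟩ h
      obtain ⟨i, hi, a, b, -⟩ := (memΛ x y).1 h
      exact ⟨a, b⟩
    · intro x y x' y' h _ _ _ _
      obtain ⟨i, hi, a, b, c, e⟩ := (memΛ x y).1 h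
      exact (memΛ x' y').2 ⟨i, hi, by omega, by omega, by omega, by omega⟩
  have lowμ : LowerBox μ := by
    constructor
    · rintro ⟨x, y⟩ h
      obtain ⟨a, b, -⟩ := (memμ x y).1 h
      exact ⟨a, b⟩
    · intro x y x' y' h _ _ _ _
      obtain ⟨a, b, c, e⟩ := (memμ x y).1 h
      exact (memμ x' y').2 ⟨by omega, by omega, by omega, by omega⟩
  have sub : ∀ p ∈ μ, p ∈ Λ := by
    rintro ⟨x, y⟩ h
    obtain ⟨a, b, c, e⟩ := (memμ x y).1 h
    exact (memΛ x y).2 ⟨j, by omega, a, b, c, by omega⟩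
  have corner : ∀ k : ℤ, ((g : ℤ) - d + r + α j + k, (r : ℤ) - j + k) ∈ Λ → k ≤ 0 := by
    intro k h
    obtain ⟨i, hi, a, b, c, e⟩ := (memΛ _ _).1 h
    by_cases hij : i = j + 1
    · subst hij
      push_cast at e
      omega
    · have := hαmono i j (by omega) (by omega)
      omega
  have bd := idt_bound' lowΛ ht
  have mono := idt_mono lowΛ ht
  refine ⟨⟨?_, fun p hp => ⟨p, sub p hp, rfl⟩, fun p hp q hq => ht.2.2.2 p hp q (sub q hq)⟩, ?_⟩
  · obtain ⟨h1, h2, h3, h4⟩ := ht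
    exact ⟨fun p hp => h1 p (sub p hp), fun p hp q hq => h2 p (sub p hp) q (sub q hq),
      fun p hp q hq => h3 p (sub p hp) q (sub q hq),
      fun p hp q hq => h4 p (sub p hp) q (sub q hq)⟩
  intro t' ht' him hcong
  have bd' := idt_bound' lowμ ht'
  have key : ∀ x y : ℤ, ∃ k : ℤ, (x, y) ∈ μ → (x + k, y + k) ∈ Λ ∧ t (x + k, y + k) = t' (x, y) := by
    intro x y
    by_cases h : (x, y) ∈ μ
    swap
    · exact ⟨0, fun h' => absurd h' h⟩
    obtain ⟨⟨u, v⟩, hq, e⟩ := him _ h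
    have hdiag : u - v = x - y := by
      have p1 := lowΛ.1 _ hq
      have p2 := lowμ.1 _ h
      have b1 := bd _ _ hq
      have b2 := bd _ _ (sub _ h)
      have b3 := bd' _ _ h
      have r1 := ht.1 _ hq
      have r2 := ht.1 _ (sub _ h)
      simp only at p1 p2
      by_cases hv : 2 ≤ t (u, v)
      · exact modEq_small hg (hm _ hv r1.2) (hcong _ hq _ h e hv) (by omega)
          (by omega)
      · omega
    refine ⟨u - x, fun _ => ?_⟩
    have e1 : x + (u - x) = u := by ring
    have e2 : y + (u - x) = v := by omega
    rw [e1, e2]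
    exact ⟨hq, e⟩
  choose k hk using key
  have stepx : ∀ x y : ℤ, (x, y) ∈ μ → (x + 1, y) ∈ μ → k x y ≤ k (x + 1) y := by
    intro x y h h'
    by_contra! hlt
    obtain ⟨a, b⟩ := hk _ _ h
    obtain ⟨a', b'⟩ := hk _ _ h'
    have := ht'.2.1 _ h _ h' rfl (by simp)
    have := mono _ _ _ _ a' a (by omega) (by omega)
    omega
  have stepy : ∀ x y : ℤ, (x, y) ∈ μ → (x, y + 1) ∈ μ → k x y ≤ k x (y + 1) := by
    intro x y h h'
    by_contra! hlt
    obtain ⟨a, b⟩ := hk _ _ h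
    obtain ⟨a', b'⟩ := hk _ _ h'
    have := ht'.2.2.1 _ h _ h' rfl (by simp)
    have := mono _ _ _ _ a' a (by omega) (by omega)
    omega
  have monx : ∀ n : ℕ, ∀ x y : ℤ, (x, y) ∈ μ → (x + n, y) ∈ μ → k x y ≤ k (x + n) y := by
    intro n
    induction n with
    | zero => intro x y _ _; simp
    | succ n ih =>
      intro x y h h'
      have p := lowμ.1 _ h
      simp only at p
      have hm := lowμ.2 _ _ (x + n) y h' (by omega) (by push_cast; omega) (by omega) le_rfl
      have e : x + ((n + 1 : ℕ) : ℤ) = x + n + 1 := by push_cast; ring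
      rw [e] at h' ⊢
      exact (ih x y h hm).trans (stepx _ _ hm h')
  have mony : ∀ n : ℕ, ∀ x y : ℤ, (x, y) ∈ μ → (x, y + n) ∈ μ → k x y ≤ k x (y + n) := by
    intro n
    induction n with
    | zero => intro x y _ _; simp
    | succ n ih =>
      intro x y h h'
      have p := lowμ.1 _ h
      simp only at p
      have hm := lowμ.2 _ _ x (y + n) h' (by omega) le_rfl (by omega) (by push_cast; omega)
      have e : y + ((n + 1 : ℕ) : ℤ) = y + n + 1 := by push_cast; ring
      rw [e] at h' ⊢
      exact (ih x y h hm).trans (stepy _ _ hm h')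
  rintro ⟨x, y⟩ h
  obtain ⟨p1, p2, p3, p4⟩ := (memμ _ _).1 h
  have hA : ((g : ℤ) - d + r + α j, y) ∈ μ := (memμ _ _).2 ⟨by omega, by omega, le_rfl, p4⟩
  have hAB : ((g : ℤ) - d + r + α j, (r : ℤ) - j) ∈ μ :=
    (memμ _ _).2 ⟨by omega, by omega, le_rfl, le_rfl⟩
  have h1 : (1, y) ∈ μ := (memμ _ _).2 ⟨by omega, by omega, by omega, p4⟩
  have c1 := monx ((g : ℤ) - d + r + α j - x).toNat x y h
  rw [Int.toNat_of_nonneg (by omega), add_sub_cancel] at c1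
  have c2 := mony ((r : ℤ) - j - y).toNat _ y hA
  rw [Int.toNat_of_nonneg (by omega), add_sub_cancel] at c2
  have c3 := monx (x - 1).toNat 1 y h1
  rw [Int.toNat_of_nonneg (by omega), add_sub_cancel] at c3
  have c4 := corner _ (hk _ _ hAB).1
  have c5 := lowΛ.1 _ (hk _ _ h1).1
  simp only at c5
  have c1 := c1 hA
  have c2 := c2 hAB
  have c3 := c3 h
  have k0 : k x y = 0 := by omega
  have := (hk _ _ h).2
  rw [k0] at this
  simpa using this.symm
end
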